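/- Let α, L > 0, let k_1, …, k_n > 0 be gains, and consider the unperturbed error systems of the previous setting (δ ≡ 0): the original system e_i' = −k_i·phi_i(e_1) + e_{i+1} (i < n), e_n' = −k_n·phi_n(e_1), and the scaled system obtained by replacing κ_i by (Lⁿ/α)^{d₀/r_{0,i}}κ_i, θ_i by (Lⁿ/α)^{d∞/r_{∞,i}}θ_i, and k_i by L^i k_i. If there exists T̄ > 0 such that every differentiable solution ē : [0,∞) → ℝⁿ of the original system satisfies ē(t) = 0 for all t ≥ T̄, then every differentiable solution e : [0,∞) → ℝⁿ of the scaled system satisfies e(t) = 0 for all t ≥ T̄/L. That is, the gain scaling accelerates the worst-case convergence time from T̄ to T̄/L. -/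

import Mathlib

/-!
Put `M = L ^ n / α`. Since consecutive weights differ by the degree, `r (j + 1) / r j = 1 + d / r j`,
so `M ^ (d / r j) * spow s (r (j + 1) / r j) = M⁻¹ * spow (M * s) (r (j + 1) / r j)`: the factors put
on `κ j` and `θ j` are exactly those for which the scaled injection is the conjugate of the original
one by the dilation `s ↦ M * s`, for both homogeneity degrees at once (`spow_conj`). Conjugation
passes to compositions, so `phi i (M * s) = M * phit i s`.

Hence, if `e` solves the scaled system, then `τ ↦ (M * L / L ^ i) * e (τ / L) i` solves the original
one: the powers `L ^ i` absorb both the time change and the gains `L ^ i * k i`. It vanishes for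
`τ ≥ T`, that is, `e` vanishes for `t ≥ T / L`.
-/

open Real Filter Topology Set

/-- Signed power: `⌈s⌋^p = sign(s)·|s|^p`. -/
noncomputable def spow (s p : ℝ) : ℝ := Real.sign s * |s| ^ p

/-- Homogeneity of the signed power: with exponent `p = r' / r = 1 + d / r`, a dilation by `M`
multiplies it by `M ^ p = M * M ^ (d / r)`. -/
lemma spow_conj {M d r r' : ℝ} (hM : 0 < M) (hr : r ≠ 0) (hr' : r' = r + d) (s : ℝ) :
    spow (M * s) (r' / r) = M * (M ^ (d / r) * spow s (r' / r)) := by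
  have hp : r' / r = 1 + d / r := by rw [hr', add_div, div_self hr]
  have hsign : Real.sign (M * s) = Real.sign s := by
    rcases lt_trichotomy s 0 with h | h | h
    · rw [Real.sign_of_neg h, Real.sign_of_neg (mul_neg_of_pos_of_neg hM h)]
    · simp [h]
    · rw [Real.sign_of_pos h, Real.sign_of_pos (mul_pos hM h)]
  have hMp : M ^ (r' / r) = M * M ^ (d / r) := by
    rw [hp, Real.rpow_add hM, Real.rpow_one]
  unfold spow
  rw [hsign, abs_mul, abs_of_pos hM, Real.mul_rpow hM.le (abs_nonneg s), hMp]
  ring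

/-- The bound `d < 1 / (n - 1)` is what keeps all weights with `1 ≤ j ≤ n` positive. -/
lemma weight_pos {n j : ℕ} {d : ℝ} (hn : 2 ≤ n) (hd : d < 1 / ((n : ℝ) - 1))
    (hj : j ∈ Finset.Icc 1 n) : 0 < 1 - ((n : ℝ) - j) * d := by
  obtain ⟨h1, h2⟩ := Finset.mem_Icc.mp hj
  have hn' : (2 : ℝ) ≤ n := by exact_mod_cast hn
  have h1' : (1 : ℝ) ≤ j := by exact_mod_cast h1
  have h2' : (j : ℝ) ≤ n := by exact_mod_cast h2
  rw [lt_div_iff₀ (by linarith)] at hd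
  rcases le_total d 0 with h | h
  · nlinarith [mul_nonneg (sub_nonneg.mpr h2') (neg_nonneg.mpr h)]
  · nlinarith [mul_nonneg (sub_nonneg.mpr h1') h]

/-- convergence-time scaling `T(z₀) → T(z₀)/L`: if every solution
of the original unperturbed error system vanishes after time `T̄`, then every
solution of the gain-scaled system (κ_i → (Lⁿ/α)^{d₀/r_{0,i}}κ_i,
θ_i → (Lⁿ/α)^{d∞/r_{∞,i}}θ_i, k_i → L^i k_i) vanishes after time `T̄/L`. -/
theorem stmt17 (n : ℕ) (hn : 2 ≤ n) (d0 dinf : ℝ)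
    (hd0 : -1 < d0) (hdd : d0 ≤ dinf) (hdinf : dinf < 1 / ((n : ℝ) - 1))
    (r0 rinf : ℕ → ℝ)
    (hr0 : ∀ j, r0 j = 1 - ((n : ℝ) - j) * d0)
    (hrinf : ∀ j, rinf j = 1 - ((n : ℝ) - j) * dinf)
    (κ θ : ℕ → ℝ)
    (hκ : ∀ j ∈ Finset.Icc 1 n, 0 < κ j) (hθ : ∀ j ∈ Finset.Icc 1 n, 0 < θ j)
    (varphi : ℕ → ℝ → ℝ)
    (hvarphi : ∀ j ∈ Finset.Icc 1 n, ∀ s,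
      varphi j s = κ j * spow s (r0 (j + 1) / r0 j) + θ j * spow s (rinf (j + 1) / rinf j))
    (phi : ℕ → ℝ → ℝ)
    (hphi1 : ∀ s, phi 1 s = varphi 1 s)
    (hphiS : ∀ i, 1 ≤ i → i < n → ∀ s, phi (i + 1) s = varphi (i + 1) (phi i s))
    (α L : ℝ) (hα : 0 < α) (hL : 0 < L)
    (varphit : ℕ → ℝ → ℝ)
    (hvarphit : ∀ j ∈ Finset.Icc 1 n, ∀ s,
      varphit j s = (L ^ n / α) ^ (d0 / r0 j) * κ j * spow s (r0 (j + 1) / r0 j)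
        + (L ^ n / α) ^ (dinf / rinf j) * θ j * spow s (rinf (j + 1) / rinf j))
    (phit : ℕ → ℝ → ℝ)
    (hphit1 : ∀ s, phit 1 s = varphit 1 s)
    (hphitS : ∀ i, 1 ≤ i → i < n → ∀ s, phit (i + 1) s = varphit (i + 1) (phit i s))
    (k : ℕ → ℝ) (hk : ∀ i ∈ Finset.Icc 1 n, 0 < k i)
    (T : ℝ) (hT : 0 < T)
    (horig : ∀ eb : ℝ → ℕ → ℝ,
      (∀ t ≥ (0 : ℝ),
        (∀ i, 1 ≤ i → i < n →
          HasDerivAt (fun τ => eb τ i) (-k i * phi i (eb t 1) + eb t (i + 1)) t) ∧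
        HasDerivAt (fun τ => eb τ n) (-k n * phi n (eb t 1)) t) →
      ∀ t ≥ T, ∀ i ∈ Finset.Icc 1 n, eb t i = 0) :
    ∀ e : ℝ → ℕ → ℝ,
      (∀ t ≥ (0 : ℝ),
        (∀ i, 1 ≤ i → i < n →
          HasDerivAt (fun τ => e τ i) (-(L ^ i * k i) * phit i (e t 1) + e t (i + 1)) t) ∧
        HasDerivAt (fun τ => e τ n) (-(L ^ n * k n) * phit n (e t 1)) t) →
      ∀ t ≥ T / L, ∀ i ∈ Finset.Icc 1 n, e t i = 0 := by
  set M : ℝ := L ^ n / α with hMdef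
  have hM : 0 < M := by positivity
  have hvar : ∀ j ∈ Finset.Icc 1 n, ∀ s, varphi j (M * s) = M * varphit j s := by
    intro j hj s
    have h0 : r0 j ≠ 0 := by
      rw [hr0]
      exact (weight_pos hn (hdd.trans_lt hdinf) hj).ne'
    have hi : rinf j ≠ 0 := by
      rw [hrinf]
      exact (weight_pos hn hdinf hj).ne'
    have h0' : r0 (j + 1) = r0 j + d0 := by
      rw [hr0, hr0]
      push_cast
      ring
    have hi' : rinf (j + 1) = rinf j + dinf := by
      rw [hrinf, hrinf]
      push_cast
      ring
    rw [hvarphi j hj, hvarphit j hj, spow_conj hM h0 h0', spow_conj hM hi hi']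
    ring
  have hphi : ∀ i, 1 ≤ i → i ≤ n → ∀ s, phi i (M * s) = M * phit i s := by
    intro i hi
    induction i, hi using Nat.le_induction with
    | base =>
      intro h s
      rw [hphi1, hphit1, hvar 1 (Finset.mem_Icc.mpr ⟨le_rfl, h⟩)]
    | succ i hi ih =>
      intro h s
      rw [hphiS i hi h, hphitS i hi h, ih (by omega),
        hvar (i + 1) (Finset.mem_Icc.mpr ⟨by omega, h⟩)]
  intro e he t ht i hi
  have hL0 : L ≠ 0 := hL.ne'
  have hder : ∀ (j : ℕ) (t v : ℝ), HasDerivAt (fun τ => e τ j) v (t / L) →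
      HasDerivAt (fun τ => M * L / L ^ j * e (τ / L) j) (M * L / L ^ j * (v * (1 / L))) t := by
    intro j t v h
    exact (HasDerivAt.comp t h ((hasDerivAt_id t).div_const L)).const_mul _
  have hone : ∀ t, M * L / L ^ 1 * e t 1 = M * e t 1 := by
    intro t
    field_simp
  have key := horig (fun τ j => M * L / L ^ j * e (τ / L) j) ?_ (L * t) ?_ i hi
  · have hLt : L * t / L = t := by field_simp
    simp only [hLt] at key
    exact (mul_eq_zero.mp key).resolve_left (by positivity)
  · intro t ht
    obtain ⟨h1, h2⟩ := he (t / L) (by positivity)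
    refine ⟨fun j hj hjn => ?_, ?_⟩
    · convert hder j t _ (h1 j hj hjn) using 1
      simp only [hone, hphi j hj hjn.le, pow_succ L j]
      field_simp
    · convert hder n t _ h2 using 1
      simp only [hone, hphi n (by omega) le_rfl]
      field_simp
  · rw [ge_iff_le, div_le_iff₀ hL] at ht
    linarith
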